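/- arXiv:2303.14810 — 7 statements merged into one kernel-verified Lean document; each statement's English description precedes it below -/
import Mathlib

section
/- Let n ≥ 1, d ≥ 1, and let α = (α_1, …, α_n) ∈ ℕ^n with α_1 + ⋯ + α_n = 2d. Then the polynomial f(x) = ∑_{i=1}^n α_i x_i^{2d} − 2d · x_1^{α_1} ⋯ x_n^{α_n} is a sum of squares of real polynomials, i.e., there exist finitely many polynomials h_1, …, h_m ∈ ℝ[x_1, …, x_n] with f = h_1² + ⋯ + h_m². -/
open Finset MvPolynomial

lemma hr_exists_fin {R : Type*} [CommRing R] {a : R} (ha : IsSumSq a) :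
    ∃ (m : ℕ) (h : Fin m → R), a = ∑ j, h j ^ 2 := by
  induction ha with
  | zero => exact ⟨0, Fin.elim0, by simp⟩
  | sq_add b _ ih =>
    obtain ⟨m, h, rfl⟩ := ih
    exact ⟨m + 1, Fin.cons b h, by simp [Fin.sum_univ_succ, sq]⟩

lemma hr_smul {R : Type*} [CommRing R] [Algebra ℝ R] {a : R} (ha : IsSumSq a) {c : ℝ}
    (hc : 0 ≤ c) : IsSumSq (algebraMap ℝ R c * a) := by
  refine IsSumSq.mul ?_ ha
  rw [← Real.mul_self_sqrt hc, map_mul]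
  exact IsSumSq.mul_self _

lemma hr_pow {R : Type*} [CommRing R] {a : R} (ha : IsSumSq a) (n : ℕ) :
    IsSumSq (a ^ n) := by
  induction n with
  | zero => rw [pow_zero, ← one_mul (1 : R)]; exact IsSumSq.mul_self _
  | succ n ih => rw [pow_succ]; exact ih.mul ha

lemma hr_sum {R ι : Type*} [CommRing R] (s : Finset ι) (f : ι → R)
    (h : ∀ i ∈ s, IsSumSq (f i)) : IsSumSq (∑ i ∈ s, f i) :=
  Finset.sum_induction f IsSumSq (fun _ _ ha hb => ha.add hb) IsSumSq.zero h

lemma hr_diff {R : Type*} [CommRing R] {a b : R} (ha : IsSumSq a) (hb : IsSumSq b) (n : ℕ) :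
    IsSumSq ((a - b) * (a ^ n - b ^ n)) := by
  rw [← (Commute.all a b).mul_geom_sum₂ n, ← mul_assoc]
  refine (IsSumSq.mul_self _).mul (hr_sum _ _ fun i _ => (hr_pow ha _).mul (hr_pow hb _))

/-- Arithmetic-geometric inequality in the cone of sums of squares. -/
lemma hr_amgm {R ι : Type*} [CommRing R] [Algebra ℝ R] [DecidableEq ι] (a : ι → R)
    (ha : ∀ i, IsSumSq (a i)) (n : ℕ) : ∀ s : Finset ι, s.card = n →
    IsSumSq (∑ i ∈ s, a i ^ n - (n : R) * ∏ i ∈ s, a i) := by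
  induction n with
  | zero => intro s hs; simp [Finset.card_eq_zero.mp hs]
  | succ n ih =>
    intro s hs
    rcases Nat.eq_zero_or_pos n with rfl | hn
    · obtain ⟨x, rfl⟩ := Finset.card_eq_one.mp hs
      simp
    have hA : IsSumSq (∑ j ∈ s, a j * (∑ i ∈ s.erase j, a i ^ n
        - (n : R) * ∏ i ∈ s.erase j, a i)) :=
      hr_sum _ _ fun j hj => (ha j).mul (ih _ (by rw [Finset.card_erase_of_mem hj, hs]; rfl))
    have hB : IsSumSq (∑ i ∈ s, ∑ j ∈ s, (a i - a j) * (a i ^ n - a j ^ n)) :=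
      hr_sum _ _ fun i _ => hr_sum _ _ fun j _ => hr_diff (ha i) (ha j) n
    have eA : ∑ j ∈ s, a j * (∑ i ∈ s.erase j, a i ^ n - (n : R) * ∏ i ∈ s.erase j, a i)
        = (∑ j ∈ s, a j) * (∑ i ∈ s, a i ^ n) - ∑ i ∈ s, a i ^ (n + 1)
          - ((n : R) + 1) * (n * ∏ i ∈ s, a i) := by
      have : ∀ j ∈ s, a j * (∑ i ∈ s.erase j, a i ^ n - (n : R) * ∏ i ∈ s.erase j, a i)
          = a j * (∑ i ∈ s, a i ^ n) - a j ^ (n + 1) - n * ∏ i ∈ s, a i := by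
        intro j hj
        rw [← Finset.mul_prod_erase s a hj, ← Finset.add_sum_erase s (fun i => a i ^ n) hj]
        ring
      rw [Finset.sum_congr rfl this, Finset.sum_sub_distrib, Finset.sum_sub_distrib,
        ← Finset.sum_mul, Finset.sum_const, hs, nsmul_eq_mul]
      push_cast
      ring
    have eB : ∑ i ∈ s, ∑ j ∈ s, (a i - a j) * (a i ^ n - a j ^ n)
        = 2 * (((n : R) + 1) * ∑ i ∈ s, a i ^ (n + 1))
          - 2 * ((∑ j ∈ s, a j) * (∑ i ∈ s, a i ^ n)) := by
      have : ∀ i ∈ s, ∑ j ∈ s, (a i - a j) * (a i ^ n - a j ^ n)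
          = ((n : R) + 1) * a i ^ (n + 1) - a i * (∑ j ∈ s, a j ^ n)
            - (∑ j ∈ s, a j) * a i ^ n + ∑ j ∈ s, a j ^ (n + 1) := by
        intro i _
        have : ∀ j ∈ s, (a i - a j) * (a i ^ n - a j ^ n)
            = a i ^ (n + 1) - a i * a j ^ n - a j * a i ^ n + a j ^ (n + 1) := by
          intro j _; ring
        rw [Finset.sum_congr rfl this, Finset.sum_add_distrib, Finset.sum_sub_distrib,
          Finset.sum_sub_distrib, Finset.sum_const, hs, nsmul_eq_mul, ← Finset.mul_sum,
          ← Finset.sum_mul]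
        push_cast
        ring
      rw [Finset.sum_congr rfl this, Finset.sum_add_distrib, Finset.sum_sub_distrib,
        Finset.sum_sub_distrib, Finset.sum_const, hs, nsmul_eq_mul, ← Finset.mul_sum,
        ← Finset.mul_sum, ← Finset.sum_mul]
      push_cast
      ring
    rw [eA] at hA
    rw [eB] at hB
    have hC := hr_smul (hB.add (hA.add hA)) (c := 1 / (2 * n)) (by positivity)
    convert hC using 1
    have h1 : algebraMap ℝ R (1 / (2 * n)) * (2 * n) = 1 := by
      have : (2 * n : R) = algebraMap ℝ R (2 * n) := by
        rw [_root_.map_mul, _root_.map_natCast, _root_.map_ofNat]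
      rw [this, ← map_mul, one_div_mul_cancel (by positivity), map_one]
    push_cast
    linear_combination (-(∑ i ∈ s, a i ^ (n + 1) - ((n : R) + 1) * ∏ i ∈ s, a i)) * h1

theorem hurwitz_reznick_sos {n d : ℕ} (hn : 1 ≤ n) (hd : 1 ≤ d)
    (α : Fin n → ℕ) (hα : ∑ i, α i = 2 * d) :
    ∃ (m : ℕ) (h : Fin m → MvPolynomial (Fin n) ℝ),
      (∑ i, MvPolynomial.C ((α i : ℕ) : ℝ) * MvPolynomial.X i ^ (2 * d)) -
          MvPolynomial.C ((2 * d : ℕ) : ℝ) * ∏ i, MvPolynomial.X i ^ α i =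
        ∑ j, h j ^ 2 := by
  apply hr_exists_fin
  have e : (Fin d ⊕ Fin d) ≃ (Σ i, Fin (α i)) :=
    Fintype.equivOfCardEq (by simp [hα, two_mul])
  let y : Fin d ⊕ Fin d → MvPolynomial (Fin n) ℝ := fun k => X (e k).1
  have hs : ∑ i, MvPolynomial.C ((α i : ℕ) : ℝ) * MvPolynomial.X i ^ (2 * d)
      = ∑ k, y k ^ (2 * d) := by
    rw [Equiv.sum_comp e (fun p => (X p.1 : MvPolynomial (Fin n) ℝ) ^ (2 * d)),
      Fintype.sum_sigma]
    simp
  have hp : ∏ i, (MvPolynomial.X i : MvPolynomial (Fin n) ℝ) ^ α i = ∏ k, y k := by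
    rw [Equiv.prod_comp e (fun p => (X p.1 : MvPolynomial (Fin n) ℝ)), Fintype.prod_sigma]
    simp
  rw [hs, hp, Fintype.sum_sum_type, Fintype.prod_sum_type]
  have key : ∀ z : Fin d → MvPolynomial (Fin n) ℝ,
      IsSumSq (∑ i, z i ^ (2 * d) - (d : MvPolynomial (Fin n) ℝ) * (∏ i, z i) ^ 2) := by
    intro z
    have := hr_amgm (fun i => z i ^ 2) (fun i => by rw [sq]; exact IsSumSq.mul_self _) d
      Finset.univ (by simp)
    simpa only [← pow_mul, Finset.prod_pow] using this
  have h3 := hr_smul (IsSumSq.mul_self ((∏ i, y (Sum.inl i)) - ∏ i, y (Sum.inr i)))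
    (c := (d : ℝ)) (by positivity)
  have h4 := ((key fun i => y (Sum.inl i)).add (key fun i => y (Sum.inr i))).add h3
  refine Eq.mp (congrArg IsSumSq ?_) h4
  simp only [_root_.map_natCast]
  push_cast
  ring
end

section
/- Let f ∈ ℝ[x_1, …, x_n] be nonnegative on ℝ^n, i.e., f(x) ≥ 0 for all x ∈ ℝ^n. Let α ∈ ℕ^n be an exponent vector in the support of f whose image in ℝ^n is an extreme point of the Newton polytope N(f) (the convex hull in ℝ^n of the support of f). Then the coefficient of the monomial x_1^{α_1} ⋯ x_n^{α_n} in f is strictly positive, and every entry α_i is even. -/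
open Finset

theorem aux_separate {n : ℕ} (f : MvPolynomial (Fin n) ℝ)
    (α : Fin n →₀ ℕ) (hα : α ∈ f.support)
    (N : Set (Fin n → ℝ))
    (hN : N = convexHull ℝ
      ((fun β : Fin n →₀ ℕ => fun i => (β i : ℝ)) '' (f.support : Set (Fin n →₀ ℕ))))
    (hext : ∀ y ∈ N, ∀ z ∈ N, (fun i => (α i : ℝ)) = midpoint ℝ y z → y = z) :
    ∃ w : Fin n → ℝ, ∀ β ∈ f.support, β ≠ α → ∑ i, w i * β i < ∑ i, w i * α i := by
  set p : (Fin n →₀ ℕ) → (Fin n → ℝ) := fun β => fun i => (β i : ℝ) with hp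
  have hconv : Convex ℝ N := hN ▸ convex_convexHull ℝ _
  have hsub : p '' (f.support : Set (Fin n →₀ ℕ)) ⊆ N := hN ▸ subset_convexHull ℝ _
  have hαN : p α ∈ N := hsub ⟨α, hα, rfl⟩
  have hinj : ∀ β, p β = p α → β = α := by
    intro β h
    ext i
    have := congrFun h i
    simpa [hp] using this
  have hex : p α ∈ N.extremePoints ℝ := by
    rw [mem_extremePoints]
    refine ⟨hαN, ?_⟩
    rintro x hx y hy ⟨s, t, hs, ht, hst, h⟩
    have hδ : 0 < min s t := lt_min hs ht
    have h1 : (s + min s t) • x + (t - min s t) • y ∈ N :=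
      hconv hx hy (by positivity) (by linarith [min_le_right s t]) (by linarith)
    have h2 : (s - min s t) • x + (t + min s t) • y ∈ N :=
      hconv hx hy (by linarith [min_le_left s t]) (by positivity) (by linarith)
    have h3 := hext _ h1 _ h2 (by
      change p α = _
      rw [← h, midpoint_eq_smul_add]
      ext i
      simp
      ring)
    have hxy : x = y := by
      ext i
      have := congrFun h3 i
      simp only [Pi.add_apply, Pi.smul_apply, smul_eq_mul] at this
      have h4 : min s t * (x i - y i) = 0 := by linarith
      rcases mul_eq_zero.1 h4 with h5 | h5
      · exact absurd h5 hδ.ne'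
      · linarith
    subst hxy
    have : x = p α := by rw [← h, ← add_smul, hst, one_smul]
    exact ⟨this, this⟩
  rw [hconv.mem_extremePoints_iff_mem_sdiff_convexHull_sdiff] at hex
  have hnot : p α ∉ convexHull ℝ (p '' (f.support : Set (Fin n →₀ ℕ)) \ {p α}) := fun h =>
    hex.2 (convexHull_mono (Set.diff_subset_diff_left hsub) h)
  have hfin : (p '' (f.support : Set (Fin n →₀ ℕ)) \ {p α}).Finite :=
    (f.support.finite_toSet.image p).subset Set.diff_subset
  obtain ⟨l, u, hl, hu⟩ := geometric_hahn_banach_closed_point (convex_convexHull ℝ _)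
    (Set.Finite.isClosed_convexHull (𝕜 := ℝ) hfin) hnot
  have hlin : ∀ v : Fin n → ℝ, l v = ∑ i, l (Pi.single i 1) * v i := by
    intro v
    conv_lhs => rw [pi_eq_sum_univ' v]
    rw [map_sum]
    refine Finset.sum_congr rfl fun i _ => ?_
    rw [map_smul, smul_eq_mul, mul_comm]
  refine ⟨fun i => l (Pi.single i 1), fun β hβ hne => ?_⟩
  have := (hl (p β) (subset_convexHull ℝ _ ⟨⟨β, hβ, rfl⟩, fun h => hne (hinj β h)⟩)).trans hu
  rwa [hlin, hlin (p α)] at this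

theorem aux_sign {n : ℕ} (f : MvPolynomial (Fin n) ℝ)
    (hf : ∀ x : Fin n → ℝ, 0 ≤ MvPolynomial.eval x f)
    (α : Fin n →₀ ℕ) (hα : α ∈ f.support) (w : Fin n → ℝ)
    (hw : ∀ β ∈ f.support, β ≠ α → ∑ i, w i * β i < ∑ i, w i * α i) (ε : Fin n → ℝ) :
    0 ≤ f.coeff α * ∏ i, ε i ^ α i := by
  have key : ∀ t : ℝ, Real.exp (-(t * ∑ i, w i * α i)) *
      MvPolynomial.eval (fun i => ε i * Real.exp (t * w i)) f =
      ∑ β ∈ f.support, (f.coeff β * ∏ i, ε i ^ β i) *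
        Real.exp (t * (∑ i, w i * β i - ∑ i, w i * α i)) := by
    intro t
    rw [MvPolynomial.eval_eq', Finset.mul_sum]
    refine Finset.sum_congr rfl fun β _ => ?_
    have : ∏ i, (ε i * Real.exp (t * w i)) ^ β i =
        (∏ i, ε i ^ β i) * Real.exp (t * ∑ i, w i * β i) := by
      simp_rw [mul_pow]
      rw [Finset.prod_mul_distrib, Finset.mul_sum, Real.exp_sum]
      congr 1
      refine Finset.prod_congr rfl fun i _ => ?_
      rw [← Real.exp_nat_mul]
      congr 1
      ring
    rw [this, mul_sub, sub_eq_add_neg, Real.exp_add]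
    ring
  have hlim : Filter.Tendsto (fun t : ℝ => ∑ β ∈ f.support, (f.coeff β * ∏ i, ε i ^ β i) *
        Real.exp (t * (∑ i, w i * β i - ∑ i, w i * α i))) Filter.atTop
      (nhds (∑ β ∈ f.support, if β = α then f.coeff α * ∏ i, ε i ^ α i else 0)) := by
    refine tendsto_finsetSum _ fun β hβ => ?_
    split_ifs with h
    · subst h
      simp
    · have h0 := sub_neg.2 (hw β hβ h)
      have := (Real.tendsto_exp_atBot.comp
        (Filter.tendsto_id.atTop_mul_const_of_neg h0)).const_mul (f.coeff β * ∏ i, ε i ^ β i)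
      simpa using this
  rw [Finset.sum_ite_eq' f.support α, if_pos hα] at hlim
  refine ge_of_tendsto' hlim fun t => ?_
  rw [← key]
  exact mul_nonneg (Real.exp_pos _).le (hf _)

theorem vertex_coeff_pos_and_even {n : ℕ} (f : MvPolynomial (Fin n) ℝ)
    (hf : ∀ x : Fin n → ℝ, 0 ≤ MvPolynomial.eval x f)
    (α : Fin n →₀ ℕ) (hα : α ∈ f.support)
    (N : Set (Fin n → ℝ))
    (hN : N = convexHull ℝ
      ((fun β : Fin n →₀ ℕ => fun i => (β i : ℝ)) '' (f.support : Set (Fin n →₀ ℕ))))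
    (hext : ∀ y ∈ N, ∀ z ∈ N, (fun i => (α i : ℝ)) = midpoint ℝ y z → y = z) :
    0 < f.coeff α ∧ ∀ i, Even (α i) := by
  obtain ⟨w, hw⟩ := aux_separate f α hα N hN hext
  have hs := aux_sign f hf α hα w hw
  have hpos : 0 < f.coeff α := by
    have h1 := hs (fun _ => 1)
    simp only [one_pow, Finset.prod_const_one, mul_one] at h1
    exact lt_of_le_of_ne h1 (MvPolynomial.mem_support_iff.1 hα).symm
  refine ⟨hpos, fun i => ?_⟩
  by_contra hodd
  rw [Nat.not_even_iff_odd] at hodd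
  have h1 := hs (fun j => if j = i then -1 else 1)
  have h2 : ∏ j, (if j = i then (-1 : ℝ) else 1) ^ α j = -1 := by
    rw [Finset.prod_eq_single i]
    · simp [hodd.neg_one_pow]
    · intro j _ hj
      simp [hj]
    · simp
  rw [h2] at h1
  linarith
end

section
/- Let α, β ∈ ℕ^k be such that β is not a permutation of α (there is no permutation σ of {1, …, k} with β_i = α_{σ(i)} for all i). Let f(x) = x_1^{β_1} ⋯ x_k^{β_k} − x_1^{α_1} ⋯ x_k^{α_k}. If the symmetrization f_sym is nonnegative on all of ℝ^k, then β_i is even for every i ∈ {1, …, k}. -/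
open Finset

/-- base-`N` value of the exponent vector `b` moved by `σ` -/
def wt {k : ℕ} (N : ℕ) (b : Fin k → ℕ) (σ : Equiv.Perm (Fin k)) : ℕ :=
  ∑ i, N ^ (σ i : ℕ) * b i

lemma wt_eq {k : ℕ} (N : ℕ) (b : Fin k → ℕ) (σ : Equiv.Perm (Fin k)) :
    wt N b σ = ∑ j, b (σ.symm j) * N ^ (j : ℕ) := by
  unfold wt
  rw [← Equiv.sum_comp σ (fun j => b (σ.symm j) * N ^ (j : ℕ))]
  simp [mul_comm]

lemma wt_inj {k : ℕ} (N : ℕ) (a b : Fin k → ℕ) (ha : ∀ i, a i < N) (hb : ∀ i, b i < N)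
    (σ τ : Equiv.Perm (Fin k)) (h : wt N a σ = wt N b τ) (j : Fin k) :
    a (σ.symm j) = b (τ.symm j) := by
  rw [wt_eq, wt_eq] at h
  have key : (fun j => (⟨a (σ.symm j), ha _⟩ : Fin N)) = fun j => ⟨b (τ.symm j), hb _⟩ := by
    apply finFunctionFinEquiv.injective
    apply Fin.ext
    simpa [finFunctionFinEquiv] using h
  simpa using congrFun key j

lemma limit_ineq {k : ℕ} (N : ℕ) (α β : Fin k → ℕ)
    (hsym : ∀ x : Fin k → ℝ,
      0 ≤ ∑ σ : Equiv.Perm (Fin k),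
        ((∏ i, x (σ i) ^ β i) - ∏ i, x (σ i) ^ α i)) (D : ℕ)
    (hα : ∀ σ, wt N α σ ≤ D) (hβ : ∀ σ, wt N β σ ≤ D) (s : Fin k → ℝ) :
    0 ≤ ∑ σ : Equiv.Perm (Fin k),
      ((if wt N β σ = D then ∏ i, s (σ i) ^ β i else 0) -
        (if wt N α σ = D then ∏ i, s (σ i) ^ α i else 0)) := by
  let g : ℝ → ℝ := fun u => ∑ σ : Equiv.Perm (Fin k),
    ((∏ i, s (σ i) ^ β i) * u ^ (D - wt N β σ) - (∏ i, s (σ i) ^ α i) * u ^ (D - wt N α σ))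
  have hg : Continuous g := by fun_prop
  have term : ∀ (b : Fin k → ℕ) (σ : Equiv.Perm (Fin k)) (u : ℝ), 0 < u → wt N b σ ≤ D →
      (∏ i, s (σ i) ^ b i) * u ^ (D - wt N b σ)
        = u ^ D * ∏ i, (s (σ i) * (u⁻¹) ^ (N ^ (σ i : ℕ))) ^ b i := by
    intro b σ u hu hb
    simp_rw [mul_pow, ← pow_mul]
    rw [Finset.prod_mul_distrib, Finset.prod_pow_eq_pow_sum]
    change _ = u ^ D * (_ * u⁻¹ ^ wt N b σ)
    rw [pow_sub₀ _ hu.ne' hb, inv_pow]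
    ring
  have hpos : ∀ u > 0, 0 ≤ g u := by
    intro u hu
    have := mul_nonneg (pow_pos hu D).le (hsym fun j => s j * (u⁻¹) ^ (N ^ (j : ℕ)))
    rw [Finset.mul_sum] at this
    refine this.trans_eq (Eq.symm ?_)
    apply Finset.sum_congr rfl
    intro σ _
    rw [term β σ u hu (hβ σ), term α σ u hu (hα σ), mul_sub]
  have h0 : 0 ≤ g 0 := by
    have ht : Filter.Tendsto g (nhdsWithin 0 (Set.Ioi 0)) (nhds (g 0)) :=
      (hg.tendsto 0).mono_left nhdsWithin_le_nhds
    exact ge_of_tendsto ht (Filter.eventually_of_mem self_mem_nhdsWithin hpos)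
  refine h0.trans_eq (Eq.symm ?_)
  apply Finset.sum_congr rfl
  intro σ _
  have z : ∀ (b : Fin k → ℕ), wt N b σ ≤ D → ∀ c : ℝ,
      (if wt N b σ = D then c else 0) = c * 0 ^ (D - wt N b σ) := by
    intro b hb c
    split_ifs with h
    · simp [h]
    · rw [zero_pow (by omega), mul_zero]
  rw [z β (hβ σ), z α (hα σ)]

theorem beta_even_of_symmetrization_nonneg {k : ℕ} (α β : Fin k → ℕ)
    (hperm : ¬ ∃ σ : Equiv.Perm (Fin k), ∀ i, β i = α (σ i))
    (hsym : ∀ x : Fin k → ℝ,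
      0 ≤ ∑ σ : Equiv.Perm (Fin k),
        ((∏ i, x (σ i) ^ β i) - ∏ i, x (σ i) ^ α i)) :
    ∀ i, Even (β i) := by
  obtain ⟨N, hN⟩ : ∃ N, ∀ i, α i < N ∧ β i < N := by
    refine ⟨∑ i, (α i + β i) + 1, fun i => ?_⟩
    have := Finset.single_le_sum (f := fun i => α i + β i) (fun _ _ => Nat.zero_le _)
      (Finset.mem_univ i)
    omega
  have hαN := fun i => (hN i).1
  have hβN := fun i => (hN i).2
  have hne : ∀ σ τ, wt N β σ ≠ wt N α τ := by
    intro σ τ h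
    refine hperm ⟨σ.trans τ.symm, fun i => ?_⟩
    simpa using wt_inj N β α hβN hαN σ τ h (σ i)
  obtain ⟨σa, -, ha⟩ := Finset.exists_max_image univ (wt N α) ⟨1, mem_univ _⟩
  obtain ⟨σb, -, hb⟩ := Finset.exists_max_image univ (wt N β) ⟨1, mem_univ _⟩
  rcases lt_or_gt_of_ne (hne σb σa) with h | h
  · exfalso
    have := limit_ineq N α β hsym (wt N α σa) (fun σ => ha σ (mem_univ _))
      (fun σ => (hb σ (mem_univ _)).trans h.le) (fun _ => 1)
    refine absurd this (not_le.2 ?_)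
    apply Finset.sum_neg'
    · intro σ _
      rw [if_neg (hne _ _)]
      split_ifs <;> simp
    · exact ⟨σa, mem_univ _, by rw [if_neg (hne _ _)]; simp⟩
  · intro i
    by_contra hodd
    have := limit_ineq N α β hsym (wt N β σb) (fun σ => (ha σ (mem_univ _)).trans h.le)
      (fun σ => hb σ (mem_univ _)) (fun j => if j = σb i then -1 else 1)
    have val : ∀ σ, wt N β σ = wt N β σb →
        ∏ l, (if σ l = σb i then (-1 : ℝ) else 1) ^ β l = -1 := by
      intro σ hσ
      have e := wt_inj N β β hβN hβN σ σb hσ (σb i)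
      rw [Finset.prod_eq_single (σ.symm (σb i))]
      · simp only [Equiv.apply_symm_apply, if_true, e, Equiv.symm_apply_apply]
        exact (Nat.not_even_iff_odd.1 hodd).neg_one_pow
      · intro l _ hl
        rw [if_neg (fun h' => hl (by rw [← h']; simp)), one_pow]
      · simp
    refine absurd this (not_le.2 ?_)
    apply Finset.sum_neg'
    · intro σ _
      rw [if_neg (hne _ _).symm]
      split_ifs with h1
      · rw [val σ h1]; norm_num
      · simp
    · exact ⟨σb, mem_univ _, by rw [if_neg (hne _ _).symm, if_pos rfl, val σb rfl]; norm_num⟩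
end

section
/- Let α_1 ≤ α_2 and β_1 ≤ β_2 be natural numbers with α_1 + α_2 = β_1 + β_2 and (α_1, α_2) ≠ (β_1, β_2). Let f(x_1, x_2) = x_1^{β_1} x_2^{β_2} − x_1^{α_1} x_2^{α_2}. If the symmetrization f_sym(x_1, x_2) = x_1^{β_1} x_2^{β_2} + x_1^{β_2} x_2^{β_1} − x_1^{α_1} x_2^{α_2} − x_1^{α_2} x_2^{α_1} is nonnegative on ℝ², then there exist a, b, c ∈ ℕ with α_1 = 2a + c, α_2 = 2(a + b) + c, β_1 = 2a, and β_2 = 2(a + b + c). -/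
open Finset

theorem two_factor_characterization (α₁ α₂ β₁ β₂ : ℕ)
    (hα : α₁ ≤ α₂) (hβ : β₁ ≤ β₂)
    (hsum : α₁ + α₂ = β₁ + β₂)
    (hne : (α₁, α₂) ≠ (β₁, β₂))
    (hsym : ∀ x₁ x₂ : ℝ,
      0 ≤ x₁ ^ β₁ * x₂ ^ β₂ + x₁ ^ β₂ * x₂ ^ β₁ - x₁ ^ α₁ * x₂ ^ α₂ - x₁ ^ α₂ * x₂ ^ α₁) :
    ∃ a b c : ℕ, α₁ = 2 * a + c ∧ α₂ = 2 * (a + b) + c ∧ β₁ = 2 * a ∧ β₂ = 2 * (a + b + c) := by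
  have hlt : β₁ < α₁ := by
    by_contra hcon
    have h1 : α₁ ≠ β₁ := by
      intro h
      apply hne
      rw [Prod.mk.injEq]
      omega
    have h2 : β₂ + 1 ≤ α₂ := by omega
    have h := hsym 1 2
    simp only [one_pow, one_mul] at h
    have e1 : (2:ℝ) ^ (β₂ + 1) ≤ 2 ^ α₂ := pow_le_pow_right₀ (by norm_num) h2
    have e2 : (2:ℝ) ^ β₁ ≤ 2 ^ β₂ := pow_le_pow_right₀ (by norm_num) hβ
    have e3 : (0:ℝ) < 2 ^ α₁ := by positivity
    rw [pow_succ] at e1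
    linarith
  have a1 : (4:ℝ) ^ (β₁ + 1) ≤ 4 ^ β₂ := pow_le_pow_right₀ (by norm_num) (by omega)
  have a2 : (4:ℝ) ^ (α₁ + 1) ≤ 4 ^ β₂ := pow_le_pow_right₀ (by norm_num) (by omega)
  have a3 : (4:ℝ) ^ (α₂ + 1) ≤ 4 ^ β₂ := pow_le_pow_right₀ (by norm_num) (by omega)
  have p1 : (0:ℝ) < 4 ^ β₁ := by positivity
  have p2 : (0:ℝ) < 4 ^ α₁ := by positivity
  have p3 : (0:ℝ) < 4 ^ α₂ := by positivity
  have p4 : (0:ℝ) < 4 ^ β₂ := by positivity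
  rw [pow_succ] at a1 a2 a3
  have hb1 : Even β₁ := by
    by_contra hc
    rw [Nat.not_even_iff_odd] at hc
    have h := hsym (-1) 4
    rw [hc.neg_one_pow] at h
    rcases neg_one_pow_eq_or ℝ β₂ with h1 | h1 <;>
    rcases neg_one_pow_eq_or ℝ α₁ with h2 | h2 <;>
    rcases neg_one_pow_eq_or ℝ α₂ with h3 | h3 <;>
    rw [h1, h2, h3] at h <;> linarith
  have hb2 : Even β₂ := by
    by_contra hc
    rw [Nat.not_even_iff_odd] at hc
    have h := hsym 1 (-4)
    simp only [one_pow, one_mul] at h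
    rw [hc.neg_pow, neg_pow _ β₁, neg_pow _ α₁, neg_pow _ α₂] at h
    rcases neg_one_pow_eq_or ℝ β₁ with h1 | h1 <;>
    rcases neg_one_pow_eq_or ℝ α₁ with h2 | h2 <;>
    rcases neg_one_pow_eq_or ℝ α₂ with h3 | h3 <;>
    rw [h1, h2, h3] at h <;> linarith
  obtain ⟨m, hm⟩ := hb1
  obtain ⟨n, hn⟩ := hb2
  exact ⟨m, (α₂ - α₁) / 2, α₁ - β₁, by omega, by omega, by omega, by omega⟩
end

section
/- Let k ≥ 1 and α ∈ ℕ^k with α_1 + ⋯ + α_k = 2d. Then for every finite simple graph G, w_{α_1}(G) ⋯ w_{α_k}(G) ≤ w_0(G)^{k−1} · w_{2d}(G), where w_j(G) denotes the number of walks of length j in G. -/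
open Finset

/-- The number of walks of length `k` in a graph `G`, computed as
`𝟙ᵀ A^k 𝟙 = ∑_{x,y} (A^k)_{x,y}` for the adjacency matrix `A`. -/
noncomputable def walkNum {V : Type*} [Fintype V] [DecidableEq V] (G : SimpleGraph V)
    [DecidableRel G.Adj] (k : ℕ) : ℝ :=
  ∑ x : V, ∑ y : V, ((G.adjMatrix ℝ) ^ k) x y

lemma moment_cheb {ι : Type*} [Fintype ι] (c x : ι → ℝ) (hc : ∀ i, 0 ≤ c i) (hx : ∀ i, 0 ≤ x i)
    (a b : ℕ) : (∑ i, c i * x i ^ a) * (∑ i, c i * x i ^ b) ≤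
      (∑ i, c i * x i ^ 0) * (∑ i, c i * x i ^ (a + b)) := by
  have key : 0 ≤ ∑ i, ∑ j, c i * c j * ((x i ^ a - x j ^ a) * (x i ^ b - x j ^ b)) := by
    refine Finset.sum_nonneg fun i _ => Finset.sum_nonneg fun j _ => ?_
    refine mul_nonneg (mul_nonneg (hc i) (hc j)) ?_
    rcases le_total (x i) (x j) with h | h
    · exact mul_nonneg_of_nonpos_of_nonpos
        (sub_nonpos.2 (pow_le_pow_left₀ (hx i) h a)) (sub_nonpos.2 (pow_le_pow_left₀ (hx i) h b))
    · exact mul_nonneg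
        (sub_nonneg.2 (pow_le_pow_left₀ (hx j) h a)) (sub_nonneg.2 (pow_le_pow_left₀ (hx j) h b))
  have e : ∑ i, ∑ j, c i * c j * ((x i ^ a - x j ^ a) * (x i ^ b - x j ^ b)) =
      (∑ i, c i * x i ^ (a + b)) * (∑ i, c i * x i ^ 0)
      + (∑ i, c i * x i ^ 0) * (∑ i, c i * x i ^ (a + b))
      - (∑ i, c i * x i ^ a) * (∑ i, c i * x i ^ b)
      - (∑ i, c i * x i ^ b) * (∑ i, c i * x i ^ a) := by
    simp only [Finset.sum_mul_sum, ← Finset.sum_add_distrib, ← Finset.sum_sub_distrib]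
    refine Finset.sum_congr rfl fun i _ => Finset.sum_congr rfl fun j _ => ?_
    ring
  rw [e] at key
  linarith [mul_comm (∑ i, c i * x i ^ (a + b)) (∑ i, c i * x i ^ 0),
    mul_comm (∑ i, c i * x i ^ a) (∑ i, c i * x i ^ b)]

lemma moment_prod (M : ℕ → ℝ) (h0 : ∀ a, 0 ≤ M a) (h : ∀ a b, M a * M b ≤ M 0 * M (a + b))
    (k : ℕ) (α : Fin (k + 1) → ℕ) : ∏ t, M (α t) ≤ M 0 ^ k * M (∑ t, α t) := by
  induction k with
  | zero => simp
  | succ k ih =>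
    rw [Fin.prod_univ_succ, Fin.sum_univ_succ]
    calc M (α 0) * ∏ t : Fin (k + 1), M (α t.succ)
        ≤ M (α 0) * (M 0 ^ k * M (∑ t : Fin (k + 1), α t.succ)) :=
          mul_le_mul_of_nonneg_left (ih _) (h0 _)
      _ = M 0 ^ k * (M (α 0) * M (∑ t : Fin (k + 1), α t.succ)) := by ring
      _ ≤ M 0 ^ k * (M 0 * M (α 0 + ∑ t : Fin (k + 1), α t.succ)) :=
          mul_le_mul_of_nonneg_left (h _ _) (pow_nonneg (h0 _) _)
      _ = _ := by ring

lemma walkNum_spectral {V : Type} [Fintype V] [DecidableEq V] (G : SimpleGraph V)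
    [DecidableRel G.Adj] : ∃ c l : V → ℝ, (∀ i, 0 ≤ c i) ∧
      ∀ a, walkNum G a = ∑ i, c i * l i ^ a := by
  have hA : (G.adjMatrix ℝ).IsHermitian := by
    rw [Matrix.IsHermitian, Matrix.conjTranspose_eq_transpose_of_trivial]
    exact G.transpose_adjMatrix
  let U : Matrix V V ℝ := hA.eigenvectorUnitary
  refine ⟨fun i => (∑ x, U x i) ^ 2, hA.eigenvalues, fun i => sq_nonneg _, fun a => ?_⟩
  have hp : (G.adjMatrix ℝ) ^ a = U * Matrix.diagonal (fun i => hA.eigenvalues i ^ a) * star U := by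
    conv_lhs => rw [hA.spectral_theorem]
    rw [← map_pow, Matrix.diagonal_pow, Unitary.conjStarAlgAut_apply]
    rfl
  unfold walkNum
  rw [hp]
  simp only [Matrix.mul_apply (M := U * _), Matrix.mul_diagonal, Matrix.star_apply, star_trivial]
  simp_rw [sq, Finset.sum_mul_sum, Finset.sum_mul]
  conv_rhs => rw [Finset.sum_comm]
  refine Finset.sum_congr rfl fun x _ => ?_
  conv_rhs => rw [Finset.sum_comm]
  refine Finset.sum_congr rfl fun y _ => Finset.sum_congr rfl fun i _ => ?_
  ring

theorem walk_prod_le_pow_mul {k d : ℕ} (hk : 1 ≤ k)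
    (α : Fin k → ℕ) (hα : ∑ t, α t = 2 * d)
    (V : Type) [Fintype V] [DecidableEq V] (G : SimpleGraph V) [DecidableRel G.Adj] :
    ∏ t, walkNum G (α t) ≤ walkNum G 0 ^ (k - 1) * walkNum G (2 * d) := by
  obtain ⟨c, l, hc, hw⟩ := walkNum_spectral G
  obtain ⟨k, rfl⟩ : ∃ m, k = m + 1 := ⟨k - 1, by omega⟩
  have hnn : ∀ a, 0 ≤ walkNum G a := by
    intro a
    refine Finset.sum_nonneg fun x _ => Finset.sum_nonneg fun y _ => ?_
    rw [SimpleGraph.adjMatrix_pow_apply_eq_card_walk]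
    positivity
  have hM := moment_prod (fun a => ∑ i, c i * |l i| ^ a)
    (fun a => Finset.sum_nonneg fun i _ => mul_nonneg (hc i) (pow_nonneg (abs_nonneg _) _))
    (fun a b => moment_cheb c (fun i => |l i|) hc (fun i => abs_nonneg _) a b) k α
  have h0 : walkNum G 0 = ∑ i, c i * |l i| ^ 0 := by simp [hw]
  have h2 : walkNum G (2 * d) = ∑ i, c i * |l i| ^ (2 * d) := by
    simp [hw, pow_mul, sq_abs]
  rw [hα] at hM
  rw [h0, h2, Nat.add_sub_cancel]
  refine le_trans (Finset.prod_le_prod (fun t _ => hnn _) fun t _ => ?_) hM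
  rw [hw]
  refine Finset.sum_le_sum fun i _ => mul_le_mul_of_nonneg_left ?_ (hc i)
  rw [← abs_pow]
  exact le_abs_self _
end

section
/- For all a, b, c ∈ ℕ and every finite simple graph G, the inequality w_{2a+c}(G) · w_{2(a+b)+c}(G) ≤ w_{2a}(G) · w_{2(a+b+c)}(G) holds, where w_j(G) denotes the number of walks of length j in G. -/
open Finset

lemma exists_moments {V : Type} [Fintype V] [DecidableEq V] (G : SimpleGraph V)
    [DecidableRel G.Adj] : ∃ (m l : V → ℝ), (∀ i, 0 ≤ m i) ∧
      ∀ k, walkNum G k = ∑ i, m i * l i ^ k := by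
  have hA : (G.adjMatrix ℝ).IsHermitian := by
    rw [Matrix.IsHermitian, Matrix.conjTranspose_eq_transpose_of_trivial]
    exact G.isSymm_adjMatrix
  refine ⟨fun i => (∑ x, (hA.eigenvectorUnitary : Matrix V V ℝ) x i) ^ 2, hA.eigenvalues,
    fun i => sq_nonneg _, fun k => ?_⟩
  have h : (G.adjMatrix ℝ) ^ k = (hA.eigenvectorUnitary : Matrix V V ℝ) *
      Matrix.diagonal (fun i => hA.eigenvalues i ^ k) *
      (star (hA.eigenvectorUnitary : Matrix V V ℝ)) := by
    conv_lhs => rw [hA.spectral_theorem]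
    rw [← map_pow, Unitary.conjStarAlgAut_apply, Matrix.diagonal_pow]
    rfl
  unfold walkNum
  rw [h]
  generalize (hA.eigenvectorUnitary : Matrix V V ℝ) = U
  simp only [Matrix.mul_apply (M := U * _), Matrix.mul_diagonal, Matrix.star_apply, star_trivial]
  calc _ = ∑ x, ∑ i, ∑ y, U x i * hA.eigenvalues i ^ k * U y i :=
        Finset.sum_congr rfl fun x _ => Finset.sum_comm
    _ = ∑ i, ∑ x, ∑ y, U x i * hA.eigenvalues i ^ k * U y i := Finset.sum_comm
    _ = _ := by
        refine Finset.sum_congr rfl fun i _ => ?_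
        rw [sq, Finset.sum_mul_sum, Finset.sum_mul]
        refine Finset.sum_congr rfl fun x _ => ?_
        rw [Finset.sum_mul]
        refine Finset.sum_congr rfl fun y _ => ?_
        ring

lemma mono_prod {p q : ℝ} (hp : 0 ≤ p) (hq : 0 ≤ q) (m n : ℕ) :
    0 ≤ (p ^ m - q ^ m) * (p ^ n - q ^ n) := by
  rcases le_total p q with h | h
  · exact mul_nonneg_of_nonpos_of_nonpos (sub_nonpos.2 (pow_le_pow_left₀ hp h m))
      (sub_nonpos.2 (pow_le_pow_left₀ hp h n))
  · exact mul_nonneg (sub_nonneg.2 (pow_le_pow_left₀ hq h m))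
      (sub_nonneg.2 (pow_le_pow_left₀ hq h n))

lemma bracket_le (x y : ℝ) (b c : ℕ) :
    x ^ c * y ^ (2 * b + c) + y ^ c * x ^ (2 * b + c) ≤
      x ^ (2 * (b + c)) + y ^ (2 * (b + c)) := by
  have h := mono_prod (abs_nonneg x) (abs_nonneg y) (2 * b + c) c
  have e1 : x ^ (2 * (b + c)) = |x| ^ (2 * b + c) * |x| ^ c := by
    rw [← pow_add, ← (even_two_mul (b + c)).pow_abs]; congr 1; ring
  have e2 : y ^ (2 * (b + c)) = |y| ^ (2 * b + c) * |y| ^ c := by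
    rw [← pow_add, ← (even_two_mul (b + c)).pow_abs]; congr 1; ring
  have h1 : x ^ c * y ^ (2 * b + c) ≤ |x| ^ c * |y| ^ (2 * b + c) := by
    refine (le_abs_self _).trans_eq ?_
    rw [abs_mul, abs_pow, abs_pow]
  have h2 : y ^ c * x ^ (2 * b + c) ≤ |y| ^ c * |x| ^ (2 * b + c) := by
    refine (le_abs_self _).trans_eq ?_
    rw [abs_mul, abs_pow, abs_pow]
  rw [e1, e2]
  nlinarith

theorem sandwich_walk_inequality (a b c : ℕ)
    (V : Type) [Fintype V] [DecidableEq V] (G : SimpleGraph V) [DecidableRel G.Adj] :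
    walkNum G (2 * a + c) * walkNum G (2 * (a + b) + c) ≤
      walkNum G (2 * a) * walkNum G (2 * (a + b + c)) := by
  obtain ⟨m, l, hm, hw⟩ := exists_moments G
  have key : ∀ s t, 2 * (walkNum G s * walkNum G t) =
      ∑ i, ∑ j, m i * m j * (l i ^ s * l j ^ t + l j ^ s * l i ^ t) := by
    intro s t
    have h1 : walkNum G s * walkNum G t =
        ∑ i, ∑ j, m i * m j * (l i ^ s * l j ^ t) := by
      rw [hw, hw, Finset.sum_mul_sum]
      exact Finset.sum_congr rfl fun i _ => Finset.sum_congr rfl fun j _ => by ring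
    have h2 : walkNum G s * walkNum G t =
        ∑ i, ∑ j, m i * m j * (l j ^ s * l i ^ t) := by
      rw [h1, Finset.sum_comm]
      exact Finset.sum_congr rfl fun i _ => Finset.sum_congr rfl fun j _ => by ring
    simp only [mul_add, Finset.sum_add_distrib]
    linarith
  have : 2 * (walkNum G (2 * a + c) * walkNum G (2 * (a + b) + c)) ≤
      2 * (walkNum G (2 * a) * walkNum G (2 * (a + b + c))) := by
    rw [key, key]
    refine Finset.sum_le_sum fun i _ => Finset.sum_le_sum fun j _ =>
      mul_le_mul_of_nonneg_left ?_ (mul_nonneg (hm i) (hm j))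
    have h := mul_le_mul_of_nonneg_left (bracket_le (l i) (l j) b c)
      (mul_nonneg (sq_nonneg (l i ^ a)) (sq_nonneg (l j ^ a)))
    calc _ = _ := by ring
      _ ≤ _ := h
      _ = _ := by ring
  linarith
end

section
/- Let k ≥ 1, let α ∈ ℕ^k, and let σ be a permutation of {1, …, k}. Then for every finite simple graph G, w_{α_1 + α_{σ(1)}}(G) ⋯ w_{α_k + α_{σ(k)}}(G) ≤ w_{2α_1}(G) ⋯ w_{2α_k}(G), where w_j(G) denotes the number of walks of length j in G. -/
open Finset

theorem walkNum_add {V : Type} [Fintype V] [DecidableEq V] (G : SimpleGraph V)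
    [DecidableRel G.Adj] (a b : ℕ) :
    walkNum G (a + b) = ∑ z : V, (∑ x : V, ((G.adjMatrix ℝ) ^ a) x z) *
      (∑ x : V, ((G.adjMatrix ℝ) ^ b) x z) := by
  have hs : ∀ z y : V, ((G.adjMatrix ℝ) ^ b) z y = ((G.adjMatrix ℝ) ^ b) y z := by
    intro z y
    have h : ((G.adjMatrix ℝ) ^ b).IsSymm := (G.isSymm_adjMatrix (α := ℝ)).pow b
    exact h.apply y z
  unfold walkNum
  simp_rw [pow_add, Matrix.mul_apply, Finset.sum_mul_sum]
  rw [Finset.sum_comm (s := (Finset.univ : Finset V)) (t := Finset.univ)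
    (f := fun z x => ∑ y, ((G.adjMatrix ℝ) ^ a) x z * ((G.adjMatrix ℝ) ^ b) y z)]
  refine Finset.sum_congr rfl fun x _ => ?_
  rw [Finset.sum_comm]
  refine Finset.sum_congr rfl fun z _ => Finset.sum_congr rfl fun y _ => ?_
  rw [hs z y]

theorem walkNum_nonneg {V : Type} [Fintype V] [DecidableEq V] (G : SimpleGraph V)
    [DecidableRel G.Adj] (a : ℕ) : 0 ≤ walkNum G a := by
  unfold walkNum
  refine Finset.sum_nonneg fun x _ => Finset.sum_nonneg fun y _ => ?_
  rw [SimpleGraph.adjMatrix_pow_apply_eq_card_walk]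
  positivity

theorem walkNum_cs {V : Type} [Fintype V] [DecidableEq V] (G : SimpleGraph V)
    [DecidableRel G.Adj] (a b : ℕ) :
    walkNum G (a + b) ^ 2 ≤ walkNum G (2 * a) * walkNum G (2 * b) := by
  rw [two_mul, two_mul, walkNum_add, walkNum_add, walkNum_add]
  simp_rw [← pow_two]
  exact Finset.sum_mul_sq_le_sq_mul_sq _ _ _

theorem walk_perm_inequality {k : ℕ} (hk : 1 ≤ k)
    (α : Fin k → ℕ) (σ : Equiv.Perm (Fin k))
    (V : Type) [Fintype V] [DecidableEq V] (G : SimpleGraph V) [DecidableRel G.Adj] :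
    ∏ i, walkNum G (α i + α (σ i)) ≤ ∏ i, walkNum G (2 * α i) := by
  refine (abs_le_of_sq_le_sq' ?_ (Finset.prod_nonneg fun i _ => walkNum_nonneg G _)).2
  calc (∏ i, walkNum G (α i + α (σ i))) ^ 2 = ∏ i, walkNum G (α i + α (σ i)) ^ 2 :=
        (Finset.prod_pow _ _ _).symm
    _ ≤ ∏ i, (walkNum G (2 * α i) * walkNum G (2 * α (σ i))) :=
        Finset.prod_le_prod (fun i _ => sq_nonneg _) (fun i _ => walkNum_cs G _ _)
    _ = (∏ i, walkNum G (2 * α i)) ^ 2 := by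
        rw [Finset.prod_mul_distrib, Equiv.prod_comp σ (fun i => walkNum G (2 * α i)), sq]
end
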